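/- Let b ≥ 2 be an integer and x = x₁x₂… a Sturmian word over {0, 1, …, b−1}, and set ξ = Σ_{k≥1} x_k / b^k. If rep(x) = 1, then ξ is a Liouville number; and if rep(x) > 1, then the irrationality exponent of ξ satisfies μ(ξ) = rep(x) / (rep(x) − 1). -/

import Mathlib

/-!
Write `i_n = firstRep x n` for the position of the first factor of length `n` which has already
occurred, so that `r(n, x) = n + i_n`.

Combinatorics. There are `n + 1` factors of length `n`, so `i_n ≤ n + 1`, and `i_n` tends
monotonically to infinity because `x` is not eventually periodic. A Sturmian word has exactly one
right special factor of each length, with exactly two right extensions (`special_unique`). It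
follows that whenever `i_n < i_{n+1}` the jump is the largest possible, `i_{n+1} = n + 2`
(`firstRep_jump`), and that runs of one letter are bounded (`bounded_runs`).

Approximation. The repetition of a factor of length `n` at positions `j < i = i_n` gives a
rational number `r_n` of denominator at most `b ^ i_n` at distance at most
`2 / b ^ (n + i_n)` from `ξ` (`exists_approx`); when `i_n` jumps at `n`, the two
occurrences are followed by distinct letters and, runs being bounded, the distance is also at
least a constant multiple of `1 / b ^ (n + i_n)` (`exists_sep`).

If `i_n < s n` for infinitely many `n`, the `r_n` give every exponent below `1 + 1 / s`
(`mem_expSet`). Conversely, given a rational `r` of denominator `q`, take the last `n` such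
that `b ^ i_n` is at most a fixed multiple of `q`. Since `i_{n+1} = n + 2`, the number `b ^ n`
exceeds a multiple of `q`, hence either `r = r_n`, and the lower bound above applies, or
`|r - r_n| ≥ 1 / (q b ^ i_n)` dominates `|ξ - r_n|`, and `|ξ - r|` is at least a constant
multiple of `1 / q ^ 2` (`lower_bound`). If `s n < i_n` eventually, both cases exclude exponents
above `1 + 1 / s ≥ 2` (`notMem_expSet`). The number `rep(x) - 1` is the inferior limit of
`i_n / n`, and `1 + 1 / (rep(x) - 1) = rep(x) / (rep(x) - 1)`.
-/

open Filter

/-- `rc n x` : length of the shortest prefix of the infinite word `x` containing two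
(possibly overlapping) occurrences of some word of length `n`.  Here `x k` is the
`(k+1)`-st letter of the word. -/
noncomputable def rc {A : Type*} (n : ℕ) (x : ℕ → A) : ℕ :=
  sInf {m | ∃ j, j + n < m ∧ ∀ t < n, x (j + t) = x (m - n + t)}

/-- subword complexity: the number of distinct factors of length `n` of `x` -/
noncomputable def pc {A : Type*} (n : ℕ) (x : ℕ → A) : ℕ :=
  Set.ncard {w : Fin n → A | ∃ k, ∀ t : Fin n, w t = x (k + t.1)}

def IsSturmian {A : Type*} (x : ℕ → A) : Prop := ∀ n ≥ 1, pc n x = n + 1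

def EventuallyPeriodic {A : Type*} (x : ℕ → A) : Prop :=
  ∃ p > 0, ∃ N, ∀ n ≥ N, x (n + p) = x n

/-- exponent of repetition: `liminf r(n,x)/n` -/
noncomputable def repExp {A : Type*} (x : ℕ → A) : EReal :=
  Filter.atTop.liminf fun n => (((rc n x : ℝ) / (n : ℝ) : ℝ) : EReal)

/-- the irrationality exponent of a real number `ξ`, as an extended real: the supremum
of the real numbers `μ` such that `|ξ - p/q| < 1/q^μ` has infinitely many rational
solutions `p/q`.  A real number `ξ` is a Liouville number when `irrExp ξ = ⊤`. -/
noncomputable def irrExp (ξ : ℝ) : EReal :=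
  sSup ((fun m : ℝ => (m : EReal)) ''
    {m : ℝ | {q : ℚ | |ξ - (q : ℝ)| < 1 / (q.den : ℝ) ^ m}.Infinite})

/-! ### Factors of Sturmian words -/

/-- The factor of length `n` of `x` starting at position `s`. -/
def win (x : ℕ → ℕ) (n s : ℕ) : Fin n → ℕ := fun k => x (s + k)

lemma win_eq_iff {x : ℕ → ℕ} {n s t : ℕ} :
    win x n s = win x n t ↔ ∀ k < n, x (s + k) = x (t + k) :=
  ⟨fun h k hk => congrFun h ⟨k, hk⟩, fun h => funext fun k => h k k.2⟩

lemma win_mono {x : ℕ → ℕ} {n m s t : ℕ} (hnm : n ≤ m) (h : win x m s = win x m t) :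
    win x n s = win x n t :=
  win_eq_iff.2 fun k hk => win_eq_iff.1 h k (hk.trans_le hnm)

lemma win_succ {x : ℕ → ℕ} {n s t : ℕ} :
    win x (n + 1) s = win x (n + 1) t ↔ win x n s = win x n t ∧ x (s + n) = x (t + n) := by
  simp only [win_eq_iff, Nat.lt_succ_iff_lt_or_eq, or_imp, forall_and, forall_eq]

lemma win_tail {x : ℕ → ℕ} {n s t : ℕ} (h : win x (n + 1) s = win x (n + 1) t) :
    win x n (s + 1) = win x n (t + 1) :=
  win_eq_iff.2 fun k hk => by
    have := win_eq_iff.1 h (k + 1) (by omega)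
    rwa [show s + 1 + k = s + (k + 1) by ring, show t + 1 + k = t + (k + 1) by ring]

lemma ncard_range_win {x : ℕ → ℕ} (hx : IsSturmian x) (n : ℕ) :
    (Set.range (win x n)).ncard = n + 1 := by
  rcases Nat.eq_zero_or_pos n with rfl | hn
  · have : Set.range (win x 0) = {fun k => k.elim0} := by
      ext w
      simp only [Set.mem_range, Set.mem_singleton_iff]
      exact ⟨fun _ => Subsingleton.elim _ _, fun _ => ⟨0, Subsingleton.elim _ _⟩⟩
    rw [this, Set.ncard_singleton]
  · rw [← hx n hn, pc]
    congr 1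
    ext w
    simp only [Set.mem_range, Set.mem_ofPred_eq, win, funext_iff]
    exact exists_congr fun k => forall_congr' fun t => eq_comm

lemma finite_range_win {x : ℕ → ℕ} (hx : IsSturmian x) (n : ℕ) :
    (Set.range (win x n)).Finite :=
  Set.finite_of_ncard_ne_zero (by rw [ncard_range_win hx]; omega)

lemma lt_of_cover {x : ℕ → ℕ} (hx : IsSturmian x) {n i : ℕ}
    (hall : ∀ s, ∃ t < i, win x n s = win x n t) : n < i := by
  have hsub : Set.range (win x n) ⊆ ((Finset.range i).image (win x n) : Finset _) := by
    rintro _ ⟨s, rfl⟩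
    obtain ⟨t, ht, he⟩ := hall s
    simp only [Finset.coe_image, Finset.coe_range, Set.mem_image, Set.mem_Iio]
    exact ⟨t, ht, he.symm⟩
  have h1 := Set.ncard_le_ncard hsub (Finset.finite_toSet _)
  rw [ncard_range_win hx, Set.ncard_coe_finset] at h1
  have h2 : ((Finset.range i).image (win x n)).card ≤ i := by
    simpa using Finset.card_image_le (s := Finset.range i) (f := win x n)
  omega

/-- If the factors of length `n` starting before `i` are closed under passing to the next
position, then they are all the factors of length `n`; as there are `n + 1` of these, `n < i`. -/
lemma lt_of_closed {x : ℕ → ℕ} (hx : IsSturmian x) {n i : ℕ} (hi : 0 < i)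
    (hcl : ∀ s, (∃ t < i, win x n s = win x n t) → ∃ t < i, win x n (s + 1) = win x n t) :
    n < i := by
  refine lt_of_cover hx fun s => ?_
  induction s with
  | zero => exact ⟨0, hi, rfl⟩
  | succ s ih => exact hcl s ih

/-- A Sturmian word is not eventually periodic. -/
lemma not_periodic {x : ℕ → ℕ} (hx : IsSturmian x) {j i : ℕ} (hji : j < i)
    (h : ∀ n, win x n j = win x n i) : False := by
  have key : ∀ u, ∃ t < i, ∀ n, win x n u = win x n t := by
    intro u
    induction u with
    | zero => exact ⟨0, by omega, fun _ => rfl⟩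
    | succ u ih =>
      obtain ⟨t, ht, he⟩ := ih
      rcases Nat.lt_or_ge (t + 1) i with h1 | h1
      · exact ⟨t + 1, h1, fun n => win_tail (he (n + 1))⟩
      · obtain rfl : t + 1 = i := by omega
        exact ⟨j, hji, fun n => (win_tail (he (n + 1))).trans (h n).symm⟩
  exact lt_irrefl i (lt_of_cover hx fun s => (key s).imp fun t ht => ⟨ht.1, ht.2 i⟩)

/-- Uniqueness of the right special factor of length `n`, together with the fact that it has
exactly two right extensions: any two pairs of distinct factors of length `n + 1` with the same
first `n` letters coincide. -/
lemma special_unique {x : ℕ → ℕ} (hx : IsSturmian x) {n s t s' t' : ℕ}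
    (h : win x n s = win x n t) (hne : x (s + n) ≠ x (t + n))
    (h' : win x n s' = win x n t') (hne' : x (s' + n) ≠ x (t' + n)) :
    (win x (n + 1) s' = win x (n + 1) s ∧ win x (n + 1) t' = win x (n + 1) t) ∨
    (win x (n + 1) s' = win x (n + 1) t ∧ win x (n + 1) t' = win x (n + 1) s) := by
  let f : (Fin (n + 1) → ℕ) → (Fin n → ℕ) := fun w k => w k.castSucc
  have hf : ∀ s, f (win x (n + 1) s) = win x n s := fun s => rfl
  -- Removing one of two factors with the same first `n` letters leaves the truncation map onto,
  -- and then the two sides have equal cardinality, so that it is injective on the remaining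
  -- factors.
  have key : ∀ s t, win x n s = win x n t → x (s + n) ≠ x (t + n) →
      Set.InjOn f (Set.range (win x (n + 1)) \ {win x (n + 1) s}) := by
    intro s t h hne
    have hfin : (Set.range (win x (n + 1)) \ {win x (n + 1) s}).Finite :=
      (finite_range_win hx _).sdiff
    refine Set.injOn_of_ncard_image_eq ?_ hfin
    have himg : f '' (Set.range (win x (n + 1)) \ {win x (n + 1) s}) = Set.range (win x n) := by
      ext w
      constructor
      · rintro ⟨_, ⟨⟨u, rfl⟩, -⟩, rfl⟩
        exact ⟨u, rfl⟩
      · rintro ⟨u, rfl⟩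
        by_cases hu : win x (n + 1) u = win x (n + 1) s
        · refine ⟨win x (n + 1) t, ⟨⟨t, rfl⟩, fun hts => ?_⟩, ?_⟩
          · exact hne (win_succ.1 hts).2.symm
          · rw [hf, ← h, (win_succ.1 hu).1]
        · exact ⟨win x (n + 1) u, ⟨⟨u, rfl⟩, hu⟩, rfl⟩
    rw [himg, ncard_range_win hx, Set.ncard_sdiff_singleton_of_mem (Set.mem_range_self s),
      ncard_range_win hx]
    omega
  have hd : win x (n + 1) s ≠ win x (n + 1) t := fun e => hne (win_succ.1 e).2
  have hd' : win x (n + 1) s' ≠ win x (n + 1) t' := fun e => hne' (win_succ.1 e).2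
  have hs : win x (n + 1) s' = win x (n + 1) s ∨ win x (n + 1) t' = win x (n + 1) s := by
    by_contra! hc
    exact hd' (key s t h hne ⟨⟨_, rfl⟩, hc.1⟩ ⟨⟨_, rfl⟩, hc.2⟩ h')
  have ht : win x (n + 1) s' = win x (n + 1) t ∨ win x (n + 1) t' = win x (n + 1) t := by
    by_contra! hc
    exact hd' (key t s h.symm hne.symm ⟨⟨_, rfl⟩, hc.1⟩ ⟨⟨_, rfl⟩, hc.2⟩ h')
  rcases hs with hs | hs <;> rcases ht with ht | ht
  · exact absurd (hs.symm.trans ht) hd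
  · exact Or.inl ⟨hs, ht⟩
  · exact Or.inr ⟨ht, hs⟩
  · exact absurd (hs.symm.trans ht) hd

/-- Runs of a single letter in a Sturmian word have bounded length: otherwise the powers of the
letter `a` are the right special factors, so no factor starting with the other letter is right
special, and two occurrences of that other letter are followed by the same infinite word. -/
lemma bounded_runs {x : ℕ → ℕ} (hx : IsSturmian x) (a : ℕ) :
    ∃ M, ∀ s, ∃ k < M, x (s + k) ≠ a := by
  by_contra! hc
  have hinf : ∀ p, ∃ e ≥ p, x e ≠ a := by
    intro p
    by_contra! hp
    refine not_periodic hx (Nat.lt_succ_self p) fun n => win_eq_iff.2 fun k _ => ?_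
    rw [hp _ (by omega), hp _ (by omega)]
  have hsp : ∀ n, ∃ p p', win x n p = win x n p' ∧ x (p + n) = a ∧ x (p' + n) ≠ a ∧
      (0 < n → x p = a ∧ x p' = a) := by
    intro n
    obtain ⟨p, hp⟩ := hc (n + 1)
    have hex : ∃ d, x (p + d) ≠ a := by
      obtain ⟨e, he, hxe⟩ := hinf p
      exact ⟨e - p, by rwa [Nat.add_sub_cancel' he]⟩
    classical
    have hd := Nat.find_spec hex
    have hmin : ∀ k < Nat.find hex, x (p + k) = a := fun k hk => by
      simpa using Nat.find_min hex hk
    have hnd : n < Nat.find hex := by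
      by_contra hlt
      exact hd (hp _ (by omega))
    refine ⟨p, p + (Nat.find hex - n), win_eq_iff.2 fun k hk => ?_, hp n (by omega), ?_, ?_⟩
    · rw [hp k (by omega), add_assoc, hmin _ (by omega)]
    · rwa [add_assoc, Nat.sub_add_cancel hnd.le]
    · intro hn
      exact ⟨hp 0 (by omega), hmin _ (by omega)⟩
  obtain ⟨u, -, hu⟩ := hinf 0
  obtain ⟨v, huv, hv⟩ := hinf (u + 1)
  refine not_periodic hx (show u < v by omega) fun n => ?_
  induction n with
  | zero => exact win_eq_iff.2 fun k hk => absurd hk (by omega)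
  | succ n ih =>
    refine win_succ.2 ⟨ih, ?_⟩
    by_contra hne
    obtain ⟨p, p', hpp, hpa, hpa', h0⟩ := hsp n
    have hq : ∀ q, x q ≠ a → win x (n + 1) q ≠ win x (n + 1) p := by
      intro q hq he
      have h1 := win_eq_iff.1 he 0 (by omega)
      rcases Nat.eq_zero_or_pos n with rfl | hn
      · exact hq (h1.trans hpa)
      · exact hq (h1.trans (h0 hn).1)
    rcases special_unique hx hpp (by rw [hpa]; exact hpa'.symm) ih hne with h1 | h1
    · exact hq u hu h1.1
    · exact hq v hv h1.2

/-! ### Positions of first repetitions -/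

/-- The position (counted from `0`) of the first factor of length `n` of `x` that has occurred
before. By `rc_spec` the subtraction does not truncate when `x` is Sturmian. -/
noncomputable def firstRep (x : ℕ → ℕ) (n : ℕ) : ℕ := rc n x - n

/-- The properties characterising `firstRep`; existence of a repetition and the bound `n + 1`
come from the pigeonhole principle on the `n + 1` factors of length `n`. -/
lemma rc_spec {x : ℕ → ℕ} (hx : IsSturmian x) (n : ℕ) :
    rc n x = n + firstRep x n ∧ firstRep x n ≤ n + 1 ∧
    (∃ j < firstRep x n, win x n j = win x n (firstRep x n)) ∧
    ∀ j i, j < i → win x n j = win x n i → firstRep x n ≤ i := by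
  have hmem : ∀ j i, j < i → win x n j = win x n i →
      n + i ∈ {m | ∃ j, j + n < m ∧ ∀ t < n, x (j + t) = x (m - n + t)} := by
    intro j i hji h
    refine ⟨j, by omega, fun t ht => ?_⟩
    rw [Nat.add_sub_cancel_left]
    exact win_eq_iff.1 h t ht
  have hpig : ∃ j i, j < i ∧ i ≤ n + 1 ∧ win x n j = win x n i := by
    have hcard : (finite_range_win hx n).toFinset.card < (Finset.range (n + 2)).card := by
      rw [← Set.ncard_eq_toFinset_card _ (finite_range_win hx n), ncard_range_win hx,
        Finset.card_range]
      omega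
    obtain ⟨j, hj, i, hi, hne, he⟩ := Finset.exists_ne_map_eq_of_card_lt_of_maps_to hcard
      (f := win x n) (fun s _ => by simp)
    simp only [Finset.mem_range] at hj hi
    rcases lt_or_gt_of_ne hne with h | h
    · exact ⟨j, i, h, by omega, he⟩
    · exact ⟨i, j, h, by omega, he.symm⟩
  obtain ⟨j₀, i₀, h₀, hi₀, he₀⟩ := hpig
  obtain ⟨j, hj, hjt⟩ := Nat.sInf_mem ⟨_, hmem _ _ h₀ he₀⟩
  change j + n < rc n x at hj
  change ∀ t < n, x (j + t) = x (firstRep x n + t) at hjt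
  have hle : ∀ j i, j < i → win x n j = win x n i → rc n x ≤ n + i :=
    fun j i hji h => Nat.sInf_le (hmem j i hji h)
  have := hle _ _ h₀ he₀
  refine ⟨by unfold firstRep; omega, by unfold firstRep; omega,
    ⟨j, by unfold firstRep; omega, win_eq_iff.2 hjt⟩, fun j i hji h => ?_⟩
  have := hle j i hji h
  unfold firstRep; omega

lemma firstRep_mono {x : ℕ → ℕ} (hx : IsSturmian x) : Monotone (firstRep x) := by
  refine monotone_nat_of_le_succ fun n => ?_
  obtain ⟨-, -, ⟨j, hj, he⟩, -⟩ := rc_spec hx (n + 1)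
  exact (rc_spec hx n).2.2.2 j _ hj (win_mono (Nat.le_succ n) he)

/-- If `firstRep x` were bounded, some `j` would satisfy `win x n j = win x n i` for all `n` with
the same `i`, making `x` eventually periodic. -/
lemma firstRep_unbounded {x : ℕ → ℕ} (hx : IsSturmian x) (B : ℕ) : ∃ n, B < firstRep x n := by
  by_contra! hB
  have hex : ∃ n, ∀ m, firstRep x m ≤ firstRep x n := by
    have hfin : (Set.range (firstRep x)).Finite :=
      (Set.finite_Iic B).subset (by rintro _ ⟨n, rfl⟩; exact hB n)
    obtain ⟨_, ⟨n, rfl⟩, hn⟩ := Set.exists_max_image _ id hfin (Set.range_nonempty _)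
    exact ⟨n, fun m => hn _ ⟨m, rfl⟩⟩
  obtain ⟨N, hN⟩ := hex
  have hno : ∀ j, j < firstRep x N → ∃ n, win x n j ≠ win x n (firstRep x N) := by
    intro j hj
    by_contra! h
    exact not_periodic hx hj h
  choose! g hg using hno
  let m := N + ∑ j ∈ Finset.range (firstRep x N), g j
  obtain ⟨-, -, ⟨j, hj, he⟩, -⟩ := rc_spec hx m
  have hm : firstRep x m = firstRep x N :=
    le_antisymm (hN m) (firstRep_mono hx (Nat.le_add_right _ _))
  rw [hm] at hj he
  refine hg j hj (win_mono ?_ he)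
  have := Finset.single_le_sum (f := g) (fun _ _ => Nat.zero_le _) (Finset.mem_range.2 hj)
  exact this.trans (Nat.le_add_left _ _)

/-- When `firstRep` jumps between `n` and `n + 1`, it jumps as high as it can: the first return
happens at the right special factor `W` of length `n`, and both extensions of `W` have been seen
by then, so that the factors of length `n + 1` met before the next repetition are closed under
passing to the next position. -/
lemma firstRep_jump {x : ℕ → ℕ} (hx : IsSturmian x) {n : ℕ}
    (hjump : firstRep x n < firstRep x (n + 1)) :
    n + 2 ≤ firstRep x (n + 1) ∧
    ∃ j < firstRep x n, win x n j = win x n (firstRep x n) ∧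
      x (j + n) ≠ x (firstRep x n + n) := by
  obtain ⟨-, -, ⟨j, hj, he⟩, -⟩ := rc_spec hx n
  obtain ⟨-, -, ⟨j', hj', he'⟩, hmin⟩ := rc_spec hx (n + 1)
  have hne : x (j + n) ≠ x (firstRep x n + n) := fun h => by
    have := hmin j _ hj (win_succ.2 ⟨he, h⟩)
    omega
  refine ⟨?_, j, hj, he, hne⟩
  refine lt_of_closed hx (n := n + 1) (by omega) ?_
  rintro s ⟨t, ht, hst⟩
  by_cases hx' : x (s + 1 + n) = x (t + 1 + n)
  · have h1 : win x (n + 1) (s + 1) = win x (n + 1) (t + 1) := win_succ.2 ⟨win_tail hst, hx'⟩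
    rcases Nat.lt_or_ge (t + 1) (firstRep x (n + 1)) with h2 | h2
    · exact ⟨t + 1, h2, h1⟩
    · have h3 : t + 1 = firstRep x (n + 1) := by omega
      exact ⟨j', hj', by rw [h1, h3, he']⟩
  · rcases special_unique hx he hne (win_tail hst) hx' with h1 | h1
    · exact ⟨j, by omega, h1.1⟩
    · exact ⟨firstRep x n, hjump, h1.1⟩

/-! ### Expansions in base `b` and rational approximations -/

/-- The real number whose base `b` expansion is the word `x` with its first `s` letters
removed. -/
noncomputable def tail (b : ℕ) (x : ℕ → ℕ) (s : ℕ) : ℝ :=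
  ∑' k : ℕ, (x (s + k) : ℝ) / (b : ℝ) ^ (k + 1)

lemma hasSum_geom {b : ℕ} (hb : 2 ≤ b) :
    HasSum (fun k : ℕ => ((b : ℝ) - 1) / (b : ℝ) ^ (k + 1)) 1 := by
  have hb' : (2 : ℝ) ≤ b := by exact_mod_cast hb
  have h := (hasSum_geometric_of_lt_one (r := (b : ℝ)⁻¹) (by positivity)
    (inv_lt_one_of_one_lt₀ (by linarith))).mul_left (((b : ℝ) - 1) / b)
  have h0 : (b : ℝ) - 1 ≠ 0 := by linarith
  have h1 : 1 - (b : ℝ)⁻¹ = ((b : ℝ) - 1) / b := by field_simp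
  have h2 : (((b : ℝ) - 1) / b) * (1 - (b : ℝ)⁻¹)⁻¹ = 1 := by
    rw [h1]
    field_simp
  rw [h2] at h
  have h3 : (fun k : ℕ => ((b : ℝ) - 1) / (b : ℝ) ^ (k + 1)) =
      fun k => ((b : ℝ) - 1) / b * ((b : ℝ)⁻¹) ^ k := by
    funext k
    rw [inv_pow, pow_succ]
    field_simp
  rw [h3]
  exact h

section

variable {b : ℕ} {x : ℕ → ℕ}

lemma summable_digits (hb : 2 ≤ b) (hdig : ∀ k, x k < b) (s : ℕ) :
    Summable fun k : ℕ => (x (s + k) : ℝ) / (b : ℝ) ^ (k + 1) := by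
  refine Summable.of_nonneg_of_le (fun k => by positivity) (fun k => ?_) (hasSum_geom hb).summable
  have : (x (s + k) : ℝ) + 1 ≤ b := by exact_mod_cast hdig (s + k)
  gcongr
  linarith

lemma tail_nonneg (s : ℕ) : 0 ≤ tail b x s := tsum_nonneg fun k => by positivity

lemma tail_le_one (hb : 2 ≤ b) (hdig : ∀ k, x k < b) (s : ℕ) : tail b x s ≤ 1 := by
  rw [← (hasSum_geom hb).tsum_eq]
  refine (summable_digits hb hdig s).tsum_le_tsum (fun k => ?_) (hasSum_geom hb).summable
  have : (x (s + k) : ℝ) + 1 ≤ b := by exact_mod_cast hdig (s + k)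
  gcongr
  linarith

lemma tail_succ (hb : 2 ≤ b) (hdig : ∀ k, x k < b) (s : ℕ) :
    b * tail b x s = x s + tail b x (s + 1) := by
  have hb0 : (b : ℝ) ≠ 0 := by positivity
  have h := (summable_digits hb hdig s).tsum_eq_zero_add
  rw [tail, h, mul_add, ← tsum_mul_left, tail]
  congr 1
  · simp only [add_zero, zero_add, pow_one]
    field_simp
  · refine tsum_congr fun k => ?_
    rw [show s + (k + 1) = s + 1 + k by ring, pow_succ _ (k + 1)]
    field_simp

/-- Shifting by `n` letters multiplies by `b ^ n` and removes an integer part which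
depends only on these `n` letters. -/
lemma tail_shift (hb : 2 ≤ b) (hdig : ∀ k, x k < b) (n : ℕ) {s t : ℕ}
    (h : win x n s = win x n t) :
    (b : ℝ) ^ n * (tail b x s - tail b x t) = tail b x (s + n) - tail b x (t + n) := by
  induction n with
  | zero => simp
  | succ n ih =>
    obtain ⟨h1, h2⟩ := win_succ.1 h
    have e1 := tail_succ hb hdig (s + n)
    have e2 := tail_succ hb hdig (t + n)
    rw [← add_assoc, ← add_assoc, pow_succ, mul_right_comm, ih h1]
    rw [h2] at e1
    linarith

lemma exists_int_part (hb : 2 ≤ b) (hdig : ∀ k, x k < b) (n : ℕ) :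
    ∃ A : ℤ, (b : ℝ) ^ n * tail b x 0 = A + tail b x n := by
  induction n with
  | zero => exact ⟨0, by simp⟩
  | succ n ih =>
    obtain ⟨A, hA⟩ := ih
    refine ⟨b * A + x n, ?_⟩
    have := tail_succ hb hdig n
    rw [pow_succ, mul_right_comm, hA]
    push_cast
    linarith

/-- A repetition `win x n j = win x n i` gives a rational approximation of denominator at most
`b ^ i`, namely the number whose expansion agrees with that of `x` up to position `i` and then keeps
repeating the letters at positions `j, …, i - 1`. Its distance to the expansion of `x` is
controlled from both sides by what follows the two occurrences. -/
lemma exists_approx (hb : 2 ≤ b) (hdig : ∀ k, x k < b) {n j i : ℕ} (hji : j < i)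
    (h : win x n j = win x n i) :
    ∃ r : ℚ, (r.den : ℝ) ≤ (b : ℝ) ^ i ∧
      |tail b x 0 - r| ≤ 2 / (b : ℝ) ^ (n + i) ∧
      |tail b x (i + n) - tail b x (j + n)| / (b : ℝ) ^ (n + i) ≤ |tail b x 0 - r| := by
  have hb' : (2 : ℝ) ≤ b := by exact_mod_cast hb
  have hb0 : (0 : ℝ) < b := by linarith
  obtain ⟨A, hA⟩ := exists_int_part hb hdig i
  obtain ⟨B, hB⟩ := exists_int_part hb hdig j
  have hlt : b ^ j < b ^ i := Nat.pow_lt_pow_right (by omega) hji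
  set Q : ℕ := b ^ i - b ^ j with hQ
  have hQ0 : 0 < Q := by omega
  have hQr : (Q : ℝ) = (b : ℝ) ^ i - (b : ℝ) ^ j := by
    rw [hQ, Nat.cast_sub hlt.le]; push_cast; rfl
  have hQ0' : (0 : ℝ) < Q := by exact_mod_cast hQ0
  have hQle : (Q : ℝ) ≤ (b : ℝ) ^ i := by rw [hQr]; linarith [pow_pos hb0 j]
  have hQge : (b : ℝ) ^ i ≤ 2 * Q := by
    have h1 : (b : ℝ) ^ (j + 1) ≤ (b : ℝ) ^ i := pow_le_pow_right₀ (by linarith) hji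
    have h2 : 2 * (b : ℝ) ^ j ≤ (b : ℝ) ^ (j + 1) := by
      rw [pow_succ]; nlinarith [pow_pos hb0 j]
    rw [hQr]; linarith
  have hr : (((A - B : ℤ) / (Q : ℤ) : ℚ) : ℝ) = ((A : ℝ) - B) / Q := by push_cast; rfl
  have hs := tail_shift hb hdig n h.symm
  have hbn : (0 : ℝ) < (b : ℝ) ^ n := by positivity
  have hdiff : tail b x 0 - (((A - B : ℤ) / (Q : ℤ) : ℚ) : ℝ) =
      (tail b x (i + n) - tail b x (j + n)) / ((b : ℝ) ^ n * Q) := by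
    rw [hr, ← hs, eq_div_iff (by positivity)]
    field_simp
    rw [hQr]
    linarith
  have habs : |tail b x (i + n) - tail b x (j + n)| ≤ 1 := by
    rw [abs_le]
    constructor <;> linarith [tail_nonneg (b := b) (x := x) (i + n),
      tail_nonneg (b := b) (x := x) (j + n), tail_le_one hb hdig (i + n),
      tail_le_one hb hdig (j + n)]
  refine ⟨((A - B : ℤ) / (Q : ℤ) : ℚ), ?_, ?_, ?_⟩
  · have hd := Rat.den_dvd (A - B) Q
    have : (((A - B : ℤ) / (Q : ℤ) : ℚ)).den ≤ Q := by
      refine Nat.le_of_dvd hQ0 (by exact_mod_cast hd)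
    exact le_trans (by exact_mod_cast this) hQle
  · rw [hdiff, abs_div, abs_of_pos (mul_pos hbn hQ0'), pow_add,
      div_le_div_iff₀ (by positivity) (by positivity)]
    have h1 := mul_le_mul_of_nonneg_right habs (by positivity : 0 ≤ (b : ℝ) ^ n * (b : ℝ) ^ i)
    have h2 := mul_le_mul_of_nonneg_left hQge hbn.le
    linarith
  · rw [hdiff, abs_div, abs_of_pos (mul_pos hbn hQ0'), pow_add]
    gcongr

lemma tail_ge_of_ne (hb : 2 ≤ b) (hdig : ∀ k, x k < b) (k : ℕ) {s : ℕ} (h : x (s + k) ≠ 0) :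
    1 / (b : ℝ) ^ (k + 1) ≤ tail b x s := by
  have hb0 : (0 : ℝ) < b := by positivity
  induction k generalizing s with
  | zero =>
    have h1 : (1 : ℝ) ≤ x s := by exact_mod_cast Nat.one_le_iff_ne_zero.2 h
    rw [zero_add, pow_one, div_le_iff₀ hb0]
    linarith [tail_succ hb hdig s, tail_nonneg (b := b) (x := x) (s + 1)]
  | succ k ih =>
    have h1 := ih (s := s + 1) (by rwa [show s + 1 + k = s + (k + 1) by ring])
    rw [pow_succ, ← div_div, div_le_iff₀ hb0]
    have : (0 : ℝ) ≤ x s := Nat.cast_nonneg _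
    linarith [tail_succ hb hdig s]

lemma tail_le_of_ne (hb : 2 ≤ b) (hdig : ∀ k, x k < b) (k : ℕ) {s : ℕ} (h : x (s + k) ≠ b - 1) :
    1 / (b : ℝ) ^ (k + 1) ≤ 1 - tail b x s := by
  have hb0 : (0 : ℝ) < b := by positivity
  induction k generalizing s with
  | zero =>
    have h0 : x s ≠ b - 1 := h
    have h1 : (x s : ℝ) + 2 ≤ b := by
      have := hdig s
      exact_mod_cast (show x s + 2 ≤ b by omega)
    rw [zero_add, pow_one, div_le_iff₀ hb0]
    linarith [tail_succ hb hdig s, tail_le_one hb hdig (s + 1)]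
  | succ k ih =>
    have h1 := ih (s := s + 1) (by rwa [show s + 1 + k = s + (k + 1) by ring])
    rw [pow_succ, ← div_div, div_le_iff₀ hb0]
    have : (x s : ℝ) + 1 ≤ b := by exact_mod_cast hdig s
    linarith [tail_succ hb hdig s]

/-- Since runs of the letters `0` and `b - 1` are bounded, all tails stay away from `0` and `1`,
so that tails with distinct first letters are uniformly far apart. -/
lemma exists_sep (hb : 2 ≤ b) (hdig : ∀ k, x k < b) (hx : IsSturmian x) :
    ∃ c : ℝ, 0 < c ∧ ∀ s t, x s ≠ x t → c ≤ |tail b x s - tail b x t| := by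
  have hb' : (2 : ℝ) ≤ b := by exact_mod_cast hb
  have hb0 : (0 : ℝ) < b := by positivity
  obtain ⟨M, hM⟩ := bounded_runs hx 0
  obtain ⟨M', hM'⟩ := bounded_runs hx (b - 1)
  set δ : ℝ := 1 / (b : ℝ) ^ (M + M') with hδ
  have hδ0 : 0 < δ := by positivity
  have hmono : ∀ k, k + 1 ≤ M + M' → δ ≤ 1 / (b : ℝ) ^ (k + 1) := fun k hk =>
    one_div_le_one_div_of_le (by positivity) (pow_le_pow_right₀ (by linarith) hk)
  have hlo : ∀ s, δ ≤ tail b x s := fun s => by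
    obtain ⟨k, hk, h⟩ := hM s
    exact (hmono k (by omega)).trans (tail_ge_of_ne hb hdig k h)
  have hhi : ∀ s, δ ≤ 1 - tail b x s := fun s => by
    obtain ⟨k, hk, h⟩ := hM' s
    exact (hmono k (by omega)).trans (tail_le_of_ne hb hdig k h)
  have key : ∀ s t, x s < x t → 2 * δ / b ≤ tail b x t - tail b x s := by
    intro s t hst
    have h1 : (x s : ℝ) + 1 ≤ x t := by exact_mod_cast hst
    rw [div_le_iff₀ hb0]
    linarith [tail_succ hb hdig s, tail_succ hb hdig t, hlo (t + 1), hhi (s + 1)]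
  refine ⟨2 * δ / b, by positivity, fun s t hst => ?_⟩
  rcases lt_or_gt_of_ne hst with h | h
  · rw [abs_sub_comm]
    exact (key s t h).trans (le_abs_self _)
  · exact (key t s h).trans (le_abs_self _)

/-- Lower bound for the distance to an arbitrary rational `r`. With `n` the last index for which
`b ^ firstRep x n` does not exceed a multiple of the denominator of `r`, either `r` is the
approximation attached to the repetition of length `n`, or it differs from it and the two are
apart by the inverse of the product of their denominators. -/
lemma lower_bound (hb : 2 ≤ b) (hdig : ∀ k, x k < b) (hx : IsSturmian x) :
    ∃ c : ℝ, 0 < c ∧ ∀ r : ℚ, ∃ n : ℕ,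
      (b : ℝ) ^ firstRep x n ≤ 4 * (b : ℝ) ^ 2 * r.den ∧ 4 * r.den < (b : ℝ) ^ n ∧
      (1 / (8 * (b : ℝ) ^ 2 * (r.den : ℝ) ^ 2) ≤ |tail b x 0 - r| ∨
        c / (b : ℝ) ^ (n + firstRep x n) ≤ |tail b x 0 - r|) := by
  have hb' : (2 : ℝ) ≤ b := by exact_mod_cast hb
  have hb0 : (0 : ℝ) < b := by positivity
  obtain ⟨c, hc, hsep⟩ := exists_sep hb hdig hx
  refine ⟨c, hc, fun r => ?_⟩
  have hq : (1 : ℝ) ≤ r.den := by exact_mod_cast r.pos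
  have hex : ∃ n, 4 * (b : ℝ) ^ 2 * r.den < (b : ℝ) ^ firstRep x (n + 1) := by
    obtain ⟨B, hB⟩ := pow_unbounded_of_one_lt (4 * (b : ℝ) ^ 2 * r.den)
      (show (1 : ℝ) < b by linarith)
    obtain ⟨n, hn⟩ := firstRep_unbounded hx B
    refine ⟨n, hB.trans_le (pow_le_pow_right₀ (by linarith) ?_)⟩
    exact hn.le.trans (firstRep_mono hx (Nat.le_succ n))
  classical
  obtain ⟨n, hn, hmin⟩ : ∃ n, 4 * (b : ℝ) ^ 2 * r.den < (b : ℝ) ^ firstRep x (n + 1) ∧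
      (b : ℝ) ^ firstRep x n ≤ 4 * (b : ℝ) ^ 2 * r.den := by
    refine ⟨Nat.find hex, Nat.find_spec hex, ?_⟩
    rcases Nat.eq_zero_or_pos (Nat.find hex) with h0 | h0
    · rw [h0]
      have h1 : firstRep x 0 ≤ 1 := (rc_spec hx 0).2.1
      calc (b : ℝ) ^ firstRep x 0 ≤ (b : ℝ) ^ 1 := pow_le_pow_right₀ (by linarith) h1
        _ ≤ 4 * (b : ℝ) ^ 2 * r.den := by nlinarith
    · have h1 := Nat.find_min hex (m := Nat.find hex - 1) (by omega)
      rwa [Nat.sub_add_cancel h0, not_lt] at h1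
  have hjump : firstRep x n < firstRep x (n + 1) :=
    (pow_lt_pow_iff_right₀ (show (1 : ℝ) < b by linarith)).1 (hmin.trans_lt hn)
  obtain ⟨hge, j, hj, he, hne⟩ := firstRep_jump hx hjump
  have hbn : 4 * (r.den : ℝ) < (b : ℝ) ^ n := by
    have h1 : firstRep x (n + 1) = n + 2 := by
      have := (rc_spec hx (n + 1)).2.1
      omega
    rw [h1, pow_add] at hn
    have : 0 < (b : ℝ) ^ 2 := by positivity
    nlinarith
  refine ⟨n, hmin, hbn, ?_⟩
  obtain ⟨r', hden, hup, hlo⟩ := exists_approx hb hdig hj he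
  set i := firstRep x n
  by_cases hr : r = r'
  · right
    rw [hr]
    refine le_trans ?_ hlo
    gcongr
    exact hsep _ _ (by rw [add_comm i n, add_comm j n] at *; simpa [add_comm] using hne.symm)
  · left
    have hq' : (1 : ℝ) ≤ r'.den := by exact_mod_cast r'.pos
    have hrr : 1 / ((r.den : ℝ) * r'.den) ≤ |(r : ℝ) - r'| := by
      have h1 : (r : ℝ) - r' = (r.num * r'.den - r'.num * r.den : ℤ) / (r.den * r'.den : ℝ) := by
        have e1 : (r : ℝ) = r.num / r.den := by exact_mod_cast (Rat.num_div_den r).symm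
        have e2 : (r' : ℝ) = r'.num / r'.den := by exact_mod_cast (Rat.num_div_den r').symm
        rw [e1, e2]
        push_cast
        field_simp
      have h2 : r.num * r'.den - r'.num * r.den ≠ 0 := by
        intro h0
        rw [h0, Int.cast_zero, zero_div, sub_eq_zero] at h1
        exact hr (by exact_mod_cast h1)
      rw [h1, abs_div, abs_of_pos (by positivity : (0 : ℝ) < r.den * r'.den)]
      gcongr
      exact_mod_cast Int.one_le_abs h2
    have htri : |(r : ℝ) - r'| ≤ |tail b x 0 - r| + |tail b x 0 - r'| := by
      have := abs_sub_le (r : ℝ) (tail b x 0) r'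
      rwa [abs_sub_comm (r : ℝ) (tail b x 0)] at this
    have h1 : 1 / ((r.den : ℝ) * (b : ℝ) ^ i) ≤ 1 / ((r.den : ℝ) * r'.den) :=
      one_div_le_one_div_of_le (by positivity) (by gcongr)
    have h2 : 2 / (b : ℝ) ^ (n + i) ≤ 1 / (2 * (r.den : ℝ) * (b : ℝ) ^ i) := by
      rw [pow_add, div_le_div_iff₀ (by positivity) (by positivity)]
      nlinarith [pow_pos hb0 i]
    have h3 : 1 / ((r.den : ℝ) * (b : ℝ) ^ i) - 1 / (2 * (r.den : ℝ) * (b : ℝ) ^ i) =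
        1 / (2 * (r.den : ℝ) * (b : ℝ) ^ i) := by
      field_simp; norm_num
    have h4 : 1 / (8 * (b : ℝ) ^ 2 * (r.den : ℝ) ^ 2) ≤ 1 / (2 * (r.den : ℝ) * (b : ℝ) ^ i) := by
      refine one_div_le_one_div_of_le (by positivity) ?_
      nlinarith
    linarith

/-- The bound of `lower_bound` is positive, so the number is irrational. -/
lemma tail_irrational (hb : 2 ≤ b) (hdig : ∀ k, x k < b) (hx : IsSturmian x) (r : ℚ) :
    0 < |tail b x 0 - r| := by
  obtain ⟨c, hc, h⟩ := lower_bound hb hdig hx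
  have hq : (0 : ℝ) < r.den := by exact_mod_cast r.pos
  have hb0 : (0 : ℝ) < b := by positivity
  obtain ⟨n, -, -, h | h⟩ := h r
  · exact lt_of_lt_of_le (by positivity) h
  · exact lt_of_lt_of_le (by positivity) h

end

/-! ### Irrationality exponent and exponent of repetition -/

lemma finite_rat_of_den_le (ξ : ℝ) (D : ℕ) : {r : ℚ | r.den ≤ D ∧ |ξ - r| ≤ 1}.Finite := by
  obtain ⟨N, hN⟩ := exists_nat_ge ((|ξ| + 1) * D)
  refine Set.Finite.of_finite_image (f := fun r : ℚ => (r.num, r.den))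
    (((Set.finite_Icc (-(N : ℤ)) N).prod (Set.finite_Iic D)).subset ?_) ?_
  · rintro _ ⟨r, ⟨hd, hr⟩, rfl⟩
    refine ⟨?_, hd⟩
    have h1 : |(r : ℝ)| ≤ |ξ| + 1 := by
      have := abs_sub_abs_le_abs_sub (r : ℝ) ξ
      rw [abs_sub_comm] at this
      linarith
    have h2 : |(r.num : ℝ)| = |(r : ℝ)| * r.den := by
      have hq : (0 : ℝ) < r.den := by exact_mod_cast r.pos
      have e1 : (r : ℝ) = r.num / r.den := by exact_mod_cast (Rat.num_div_den r).symm
      rw [e1, abs_div, abs_of_pos hq, div_mul_cancel₀ _ hq.ne']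
    have h3 : (r.den : ℝ) ≤ D := by exact_mod_cast hd
    have h4 : |(r.num : ℝ)| ≤ N := by
      rw [h2]
      exact (mul_le_mul h1 h3 (Nat.cast_nonneg _) (by positivity)).trans hN
    exact abs_le.1 (by exact_mod_cast h4)
  · intro r _ r' _ h
    simp only [Prod.mk.injEq] at h
    exact Rat.ext h.1 h.2

/-- The set of admissible approximation exponents of `ξ`, whose supremum is `irrExp ξ`. -/
def ExpSet (ξ : ℝ) : Set ℝ := {m : ℝ | {q : ℚ | |ξ - (q : ℝ)| < 1 / (q.den : ℝ) ^ m}.Infinite}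

section

variable {b : ℕ} {x : ℕ → ℕ}

/-- Early repetitions infinitely often yield infinitely many good approximations. -/
lemma mem_expSet (hb : 2 ≤ b) (hdig : ∀ k, x k < b) (hx : IsSturmian x) {s m : ℝ} (hm : 1 ≤ m)
    (hsm : s * (m - 1) < 1) (hfreq : ∃ᶠ n : ℕ in atTop, (firstRep x n : ℝ) < s * n) :
    m ∈ ExpSet (tail b x 0) := by
  have hb' : (2 : ℝ) ≤ b := by exact_mod_cast hb
  have hb1 : (1 : ℝ) < b := by linarith
  have hb0 : (0 : ℝ) < b := by linarith
  intro hfin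
  -- The approximations converge to an irrational number, so they leave any finite set.
  have h1 : ∀ᶠ n : ℕ in atTop, ∀ r ∈ {q : ℚ | |tail b x 0 - (q : ℝ)| < 1 / (q.den : ℝ) ^ m},
      2 / (b : ℝ) ^ n < |tail b x 0 - r| := by
    rw [Filter.eventually_all_finite hfin]
    intro r _
    have ht : Tendsto (fun n : ℕ => 2 / (b : ℝ) ^ n) atTop (nhds 0) :=
      tendsto_const_nhds.div_atTop (tendsto_pow_atTop_atTop_of_one_lt hb1)
    exact ht.eventually_lt_const (tail_irrational hb hdig hx r)
  have h2 : ∀ᶠ n : ℕ in atTop, 1 < (1 - s * (m - 1)) * (n : ℝ) :=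
    (tendsto_natCast_atTop_atTop.const_mul_atTop (by linarith)).eventually_gt_atTop 1
  obtain ⟨n, hn, hn1, hn2⟩ := (hfreq.and_eventually (h1.and h2)).exists
  obtain ⟨-, -, ⟨j, hj, he⟩, -⟩ := rc_spec hx n
  obtain ⟨r, hden, hup, -⟩ := exists_approx hb hdig hj he
  set i := firstRep x n
  have hq : (0 : ℝ) < r.den := by exact_mod_cast r.pos
  have hmem : |tail b x 0 - r| < 1 / (r.den : ℝ) ^ m := by
    refine hup.trans_lt ?_
    rw [div_lt_div_iff₀ (by positivity) (by positivity), one_mul]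
    have h3 : (r.den : ℝ) ^ m ≤ (b : ℝ) ^ ((i : ℝ) * m) := by
      rw [Real.rpow_mul hb0.le, Real.rpow_natCast]
      exact Real.rpow_le_rpow hq.le hden (by linarith)
    have h4 : (b : ℝ) ^ (1 + (i : ℝ) * m) < (b : ℝ) ^ (n + i) := by
      rw [← Real.rpow_natCast]
      refine Real.rpow_lt_rpow_of_exponent_lt hb1 ?_
      push_cast
      have := mul_le_mul_of_nonneg_right hn.le (by linarith : 0 ≤ m - 1)
      linarith
    rw [Real.rpow_add hb0, Real.rpow_one] at h4
    calc 2 * (r.den : ℝ) ^ m ≤ b * (b : ℝ) ^ ((i : ℝ) * m) := by gcongr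
      _ < _ := h4
  have h5 := hn1 r hmem
  have h6 : 2 / (b : ℝ) ^ (n + i) ≤ 2 / (b : ℝ) ^ n := by
    gcongr
    · exact hb1.le
    · omega
  linarith

/-- If repetitions are eventually late, then `lower_bound` excludes exponents above
`1 + 1 / s`. -/
lemma notMem_expSet (hb : 2 ≤ b) (hdig : ∀ k, x k < b) (hx : IsSturmian x) {s m : ℝ}
    (hs : 0 < s) (hsm : 1 + 1 / s < m)
    (hev : ∀ᶠ n : ℕ in atTop, s * n < (firstRep x n : ℝ)) :
    m ∉ ExpSet (tail b x 0) := by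
  have hb' : (2 : ℝ) ≤ b := by exact_mod_cast hb
  have hb1 : (1 : ℝ) < b := by linarith
  have hb0 : (0 : ℝ) < b := by linarith
  have hs1 : s ≤ 1 := by
    by_contra! hs1
    have h2 : ∀ᶠ n : ℕ in atTop, 1 < (s - 1) * (n : ℝ) :=
      (tendsto_natCast_atTop_atTop.const_mul_atTop (by linarith)).eventually_gt_atTop 1
    obtain ⟨n, h1, h2⟩ := (hev.and h2).exists
    have h3 : (firstRep x n : ℝ) ≤ n + 1 := by exact_mod_cast (rc_spec hx n).2.1
    linarith
  set e : ℝ := 1 + 1 / s with he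
  have he2 : 2 ≤ e := by
    have := one_le_one_div hs hs1
    linarith
  obtain ⟨c, hc, hlow⟩ := lower_bound hb hdig hx
  obtain ⟨n₀, hn₀⟩ := eventually_atTop.1 hev
  set K : ℝ := 4 * (b : ℝ) ^ 2 with hK
  have hK0 : 0 < K := by positivity
  -- Both alternatives of `lower_bound` give a bound of order `q ^ (-e)` with `e < m`.
  set A : ℝ := min (1 / (2 * K)) (c / K ^ e) with hA
  have hA0 : 0 < A := by positivity
  have hmain : ∀ r : ℚ, (b : ℝ) ^ n₀ ≤ r.den → A / (r.den : ℝ) ^ e ≤ |tail b x 0 - r| := by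
    intro r hr
    have hq : (1 : ℝ) ≤ r.den := by exact_mod_cast r.pos
    obtain ⟨n, h1, h2, h3⟩ := hlow r
    have hnn : n₀ ≤ n := by
      have : (b : ℝ) ^ n₀ < (b : ℝ) ^ n := by linarith
      exact ((pow_lt_pow_iff_right₀ hb1).1 this).le
    rcases h3 with h3 | h3
    · refine le_trans ?_ h3
      have h4 : (r.den : ℝ) ^ 2 ≤ (r.den : ℝ) ^ e := by
        rw [← Real.rpow_natCast]
        exact Real.rpow_le_rpow_of_exponent_le hq (by exact_mod_cast he2)
      calc A / (r.den : ℝ) ^ e ≤ (1 / (2 * K)) / (r.den : ℝ) ^ 2 := by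
            gcongr
            exact min_le_left _ _
        _ = _ := by rw [hK, div_div]; ring_nf
    · refine le_trans ?_ h3
      have h4 : (b : ℝ) ^ (n + firstRep x n) ≤ (K * r.den) ^ e := by
        calc (b : ℝ) ^ (n + firstRep x n) ≤ (b : ℝ) ^ ((firstRep x n : ℝ) * e) := by
              rw [← Real.rpow_natCast]
              refine Real.rpow_le_rpow_of_exponent_le hb1.le ?_
              have h5 : (n : ℝ) ≤ firstRep x n / s := by
                rw [le_div_iff₀ hs]
                linarith [hn₀ n hnn]
              push_cast
              rw [he, mul_add, mul_one, mul_one_div]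
              linarith
          _ = ((b : ℝ) ^ firstRep x n) ^ e := by
              rw [Real.rpow_mul hb0.le, Real.rpow_natCast]
          _ ≤ (K * r.den) ^ e := Real.rpow_le_rpow (by positivity) h1 (by linarith)
      rw [Real.mul_rpow hK0.le (by linarith)] at h4
      calc A / (r.den : ℝ) ^ e ≤ (c / K ^ e) / (r.den : ℝ) ^ e := by
            gcongr
            exact min_le_right _ _
        _ = c / (K ^ e * (r.den : ℝ) ^ e) := div_div _ _ _
        _ ≤ _ := by gcongr
  have hgrow : ∀ᶠ q : ℕ in atTop, 1 / A < (q : ℝ) ^ (m - e) :=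
    ((tendsto_rpow_atTop (by linarith)).comp tendsto_natCast_atTop_atTop).eventually_gt_atTop _
  have hlarge : ∀ᶠ q : ℕ in atTop, (b : ℝ) ^ n₀ ≤ (q : ℝ) :=
    tendsto_natCast_atTop_atTop.eventually_ge_atTop _
  obtain ⟨D, hD⟩ := eventually_atTop.1 (hgrow.and hlarge)
  refine not_not.2 ((finite_rat_of_den_le (tail b x 0) D).subset fun r hr => ?_)
  have hr : |tail b x 0 - r| < 1 / (r.den : ℝ) ^ m := hr
  have hq : (1 : ℝ) ≤ r.den := by exact_mod_cast r.pos
  have hq0 : (0 : ℝ) < r.den := by linarith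
  refine ⟨?_, hr.le.trans ?_⟩
  · by_contra! hlt
    obtain ⟨h1, h2⟩ := hD r.den hlt.le
    have h3 := (hmain r h2).trans_lt hr
    rw [Real.rpow_sub hq0, div_lt_div_iff₀ hA0 (by positivity)] at h1
    rw [div_lt_div_iff₀ (by positivity) (by positivity)] at h3
    linarith
  · rw [div_le_one (by positivity)]
    exact Real.one_le_rpow hq (by linarith)

lemma frequently_of_repExp_lt (hx : IsSturmian x) {t : ℝ} (h : repExp x < t) :
    ∃ᶠ n : ℕ in atTop, (firstRep x n : ℝ) < (t - 1) * n := by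
  have h1 := (frequently_lt_of_liminf_lt (by isBoundedDefault) h).and_eventually
    (eventually_gt_atTop 0)
  refine h1.mono fun n hn => ?_
  obtain ⟨hn, hn0⟩ := hn
  have hn0' : (0 : ℝ) < n := by exact_mod_cast hn0
  rw [EReal.coe_lt_coe_iff, div_lt_iff₀ hn0', (rc_spec hx n).1] at hn
  push_cast at hn
  linarith

lemma eventually_of_lt_repExp (hx : IsSturmian x) {t : ℝ} (h : t < repExp x) :
    ∀ᶠ n : ℕ in atTop, (t - 1) * n < (firstRep x n : ℝ) := by
  have h1 := (eventually_lt_of_lt_liminf h (by isBoundedDefault)).and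
    (eventually_gt_atTop 0)
  refine h1.mono fun n hn => ?_
  obtain ⟨hn, hn0⟩ := hn
  have hn0' : (0 : ℝ) < n := by exact_mod_cast hn0
  rw [EReal.coe_lt_coe_iff, lt_div_iff₀ hn0', (rc_spec hx n).1] at hn
  push_cast at hn
  linarith

lemma repExp_ne_top (hx : IsSturmian x) : repExp x ≠ ⊤ := by
  intro h
  have h1 := eventually_of_lt_repExp hx (t := 3) (by rw [h]; exact EReal.coe_lt_top _)
  obtain ⟨n, h1, h2⟩ := (h1.and (eventually_gt_atTop 1)).exists
  have h3 : (firstRep x n : ℝ) ≤ n + 1 := by exact_mod_cast (rc_spec hx n).2.1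
  have h4 : (1 : ℝ) < n := by exact_mod_cast h2
  linarith

end

theorem irrExp_eq_of_sturmian (b : ℕ) (hb : 2 ≤ b) (x : ℕ → ℕ) (hdig : ∀ k, x k < b)
    (hx : IsSturmian x) :
    (repExp x = 1 → irrExp (∑' k : ℕ, (x k : ℝ) / (b : ℝ) ^ (k + 1)) = ⊤) ∧
    (1 < repExp x →
      irrExp (∑' k : ℕ, (x k : ℝ) / (b : ℝ) ^ (k + 1)) =
        (((repExp x).toReal / ((repExp x).toReal - 1) : ℝ) : EReal)) := by
  have htail : ∑' k : ℕ, (x k : ℝ) / (b : ℝ) ^ (k + 1) = tail b x 0 := by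
    simp only [tail, zero_add]
  rw [htail]
  change (_ → sSup ((fun m : ℝ => (m : EReal)) '' ExpSet (tail b x 0)) = ⊤) ∧
    (_ → sSup ((fun m : ℝ => (m : EReal)) '' ExpSet (tail b x 0)) = _)
  constructor
  · intro h
    refine EReal.eq_top_iff_forall_lt _ |>.2 fun y => ?_
    -- Any `m > max y 1` is an admissible exponent.
    set m : ℝ := max y 1 + 1 with hm
    have hm1 : 2 ≤ m := by linarith [le_max_right y 1]
    have hmem : m ∈ ExpSet (tail b x 0) := by
      refine mem_expSet hb hdig hx (s := 1 / m) (by linarith) ?_ ?_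
      · rw [one_div_mul_eq_div, div_lt_one (by linarith)]
        linarith
      · have h1 : repExp x < ((1 + 1 / m : ℝ) : EReal) := by
          rw [h, ← EReal.coe_one, EReal.coe_lt_coe_iff]
          have : 0 < 1 / m := by positivity
          linarith
        simpa using frequently_of_repExp_lt hx h1
    refine lt_of_lt_of_le ?_ (le_sSup ⟨m, hmem, rfl⟩)
    exact EReal.coe_lt_coe_iff.2 (by linarith [le_max_left y 1])
  · intro h
    have hbot : repExp x ≠ ⊥ := ((EReal.bot_lt_coe 1).trans h).ne'
    obtain ⟨ρ, hρ⟩ : ∃ ρ : ℝ, repExp x = ρ :=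
      ⟨_, (EReal.coe_toReal (repExp_ne_top hx) hbot).symm⟩
    have hρ1 : 1 < ρ := by
      rw [hρ] at h
      exact_mod_cast h
    have hρ0 : 0 < ρ - 1 := by linarith
    have hval : ρ / (ρ - 1) = 1 + 1 / (ρ - 1) := by field_simp; ring
    rw [hρ, EReal.toReal_coe, hval]
    refine le_antisymm (sSup_le ?_) (le_of_forall_lt fun z hz => ?_)
    · rintro _ ⟨m, hm, rfl⟩
      refine EReal.coe_le_coe_iff.2 ?_
      by_contra! hlt
      have hm1 : 0 < m - 1 := by
        have : 0 < 1 / (ρ - 1) := by positivity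
        linarith
      -- Choose `s` between `1 / (m - 1)` and `ρ - 1`.
      obtain ⟨s, hs1, hs2⟩ := exists_between
        (show 1 / (m - 1) < ρ - 1 by rw [one_div_lt hm1 hρ0]; linarith)
      have hs0 : 0 < s := lt_trans (by positivity) hs1
      refine notMem_expSet hb hdig hx hs0 ?_ ?_ hm
      · rw [one_div_lt hm1 hs0] at hs1
        linarith
      · have := eventually_of_lt_repExp hx (t := 1 + s)
          (by rw [hρ, EReal.coe_lt_coe_iff]; linarith)
        simpa using this
    · obtain ⟨y, hzy, hy⟩ := EReal.lt_iff_exists_real_btwn.1 hz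
      rw [EReal.coe_lt_coe_iff] at hy
      obtain ⟨m, hm1, hm2⟩ := exists_between (show max y 1 < 1 + 1 / (ρ - 1) from
        max_lt hy (by have : 0 < 1 / (ρ - 1) := by positivity
                      linarith))
      have hm0 : 0 < m - 1 := by linarith [le_max_right y 1]
      obtain ⟨s, hs1, hs2⟩ := exists_between
        (show ρ - 1 < 1 / (m - 1) by rw [lt_one_div hρ0 hm0]; linarith)
      have hmem : m ∈ ExpSet (tail b x 0) := by
        refine mem_expSet hb hdig hx (s := s) (by linarith) ?_ ?_
        · rwa [lt_div_iff₀ hm0] at hs2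
        · have := frequently_of_repExp_lt hx (t := 1 + s)
            (by rw [hρ, EReal.coe_lt_coe_iff]; linarith)
          simpa using this
      refine hzy.trans (lt_of_lt_of_le ?_ (le_sSup ⟨m, hmem, rfl⟩))
      exact EReal.coe_lt_coe_iff.2 (by linarith [le_max_left y 1])
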